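/- Let q be a prime power with q ≡ 1 (mod 4), q odd, let C be an irreducible conic in PG(2,q), let L be an external line of C, and let S be the set of exterior points of C lying on L. Then there is exactly one point Q of PG(2,q) not lying on L such that S ∪ {Q} is an exterior set of C. -/

import Mathlib

/-!
`PG(2,F)`: points are the 1-dimensional subspaces of `F^3` (modelled as the
projectivization of `Fin 3 → F`), lines are the 2-dimensional subspaces.
-/

variable {F : Type*} [Field F]

/-- The points of `PG(2,F)`: 1-dimensional subspaces of `F^3`. -/
abbrev PGPoint (F : Type*) [Field F] := Projectivization F (Fin 3 → F)

/-- A line of `PG(2,F)` is a 2-dimensional subspace of `F^3`. -/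
def IsProjLine (F : Type*) [Field F] (L : Submodule F (Fin 3 → F)) : Prop :=
  Module.finrank F L = 2

/-- The set of projective points lying on the subspace `L`. -/
def pointsOn (L : Submodule F (Fin 3 → F)) : Set (PGPoint F) :=
  {P | P.submodule ≤ L}

/-- `S` is a set without tangents: no line of `PG(2,F)` meets `S` in exactly one point. -/
def NoTangents (S : Set (PGPoint F)) : Prop :=
  ∀ L : Submodule F (Fin 3 → F), IsProjLine F L →
    ¬ (∃! P : PGPoint F, P ∈ S ∩ pointsOn L)

/-- The conic (zero set in `PG(2,F)`) of a quadratic form `Q` on `F^3`. -/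
def conicSet (Q : QuadraticForm F (Fin 3 → F)) : Set (PGPoint F) :=
  {P | ∀ v ∈ P.submodule, Q v = 0}

/-- Nondegeneracy of a quadratic form (via its polar form). -/
def NondegQF (Q : QuadraticForm F (Fin 3 → F)) : Prop :=
  ∀ v : Fin 3 → F, (∀ w, QuadraticMap.polar Q v w = 0) → v = 0

/-- A tangent line of a point set `C`: a line meeting `C` in exactly one point. -/
def IsTangentLine (C : Set (PGPoint F)) (L : Submodule F (Fin 3 → F)) : Prop :=
  IsProjLine F L ∧ ∃! P : PGPoint F, P ∈ C ∩ pointsOn L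

/-- An external line of a point set `C`: a line meeting `C` in no point. -/
def IsExternalLine (C : Set (PGPoint F)) (L : Submodule F (Fin 3 → F)) : Prop :=
  IsProjLine F L ∧ C ∩ pointsOn L = ∅

/-- An exterior point of `C`: a point not on `C` lying on some tangent line of `C`. -/
def IsExteriorPoint (C : Set (PGPoint F)) (P : PGPoint F) : Prop :=
  P ∉ C ∧ ∃ L : Submodule F (Fin 3 → F), IsTangentLine C L ∧ P ∈ pointsOn L

/-- An interior point of `C`: a point neither on `C` nor exterior to `C`. -/
def IsInteriorPoint (C : Set (PGPoint F)) (P : PGPoint F) : Prop :=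
  P ∉ C ∧ ¬ IsExteriorPoint C P

/-- An exterior set of `C`: every line containing at least two of its points is
an external line of `C`. -/
def IsExteriorSet (C E : Set (PGPoint F)) : Prop :=
  ∀ L : Submodule F (Fin 3 → F), IsProjLine F L →
    (∃ P1 ∈ E ∩ pointsOn L, ∃ P2 ∈ E ∩ pointsOn L, P1 ≠ P2) → IsExternalLine C L

/-!
The pole `Q₀` of `L` is the required point. As `-1` is a square, a point `p` of `L` is exterior if
and only if the line joining it to the pole is external, since both say that the product of the
values of the form at `p` and at the pole is a nonsquare.

For any other point `v` off `L`, an exterior point `p` of `L` is needed whose join with `v` is not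
external. In orthogonal coordinates `(s, t)` on `L`, the point `p` is exterior when one anisotropic
form `α s² + β t²` is a nonsquare, and its join with `v` is external when a second form
`α s² + γ t²` with `γ ≠ β` is a nonsquare. If the first always implied the second, then `γ` would be
`β` times a square, a counting argument would make the two conditions equivalent, and by Euler's
criterion `(α + β t²)^((q-1)/2)` and `(α + γ t²)^((q-1)/2)` would agree for all `t`. Their degree
`q - 1` is less than `q`, so they would agree as polynomials, which forces `β = γ`.
-/

section FiniteField

theorem isSquare_mul_sq_iff {x y : F} (hy : y ≠ 0) : IsSquare (x * y ^ 2) ↔ IsSquare x :=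
  ⟨fun h => by simpa [hy] using h.div (.sq y), fun h => h.mul (.sq y)⟩

theorem isSquare_mul_iff_not_isSquare [Finite F] {x y : F} (hx : ¬ IsSquare x) (hy : y ≠ 0) :
    IsSquare (x * y) ↔ ¬ IsSquare y := by
  classical
  have := Fintype.ofFinite F
  have hx0 : x ≠ 0 := by rintro rfl; exact hx .zero
  rw [← quadraticChar_neg_one_iff_not_isSquare,
    ← quadraticChar_one_iff_isSquare (mul_ne_zero hx0 hy), map_mul,
    quadraticChar_neg_one_iff_not_isSquare.2 hx, neg_one_mul, neg_eq_iff_eq_neg]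

open Polynomial in
theorem eq_of_forall_add_mul_sq_pow_eq [Fintype F] {a b c : F} {m : ℕ} (ha : a ≠ 0)
    (hm : 2 * m < Fintype.card F) (hm0 : (m : F) ≠ 0)
    (h : ∀ t, (a + b * t ^ 2) ^ m = (a + c * t ^ 2) ^ m) : b = c := by
  have hdeg (d : F) : (expand F 2 ((C a + C d * X) ^ m)).natDegree ≤ 2 * m := by
    rw [natDegree_expand, mul_comm]
    gcongr
    exact (natDegree_pow_le_of_le m (by compute_degree)).trans_eq (mul_one m)
  have hpoly : (C a + C b * X) ^ m = (C a + C c * X) ^ m := expand_injective two_pos <|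
    eq_of_natDegree_lt_card_of_eval_eq _ _ Function.injective_id
      (fun t => by simpa [expand_eval] using h t) ((max_le (hdeg b) (hdeg c)).trans_lt hm)
  simpa [derivative_pow, hm0, ha] using congrArg (fun f => eval 0 (derivative f)) hpoly

theorem add_mul_sq_ne_zero {a b : F} (hab : ¬ IsSquare (-(a * b))) (t : F) :
    a + b * t ^ 2 ≠ 0 := fun h =>
  hab ⟨b * t, by linear_combination -b * h⟩

theorem eq_of_forall_isSquare_add_mul_sq_iff [Finite F] {a b c : F}
    (hab : ¬ IsSquare (-(a * b))) (hac : ¬ IsSquare (-(a * c)))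
    (h : ∀ t, IsSquare (a + b * t ^ 2) ↔ IsSquare (a + c * t ^ 2)) : b = c := by
  classical
  have := Fintype.ofFinite F
  have ha : a ≠ 0 := by rintro rfl; simp at hab
  have hF : ringChar F ≠ 2 := fun h2 => hab (FiniteField.isSquare_of_char_two h2 _)
  have hodd : 2 * (Fintype.card F / 2) + 1 = Fintype.card F := by
    have := FiniteField.odd_card_of_char_ne_two hF
    omega
  have hhalf : ((Fintype.card F / 2 : ℕ) : F) ≠ 0 := fun h0 => by
    simpa [h0] using congrArg (Nat.cast (R := F)) hodd
  refine eq_of_forall_add_mul_sq_pow_eq ha (by omega) hhalf fun t => ?_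
  rw [← quadraticChar_eq_pow_of_char_ne_two' hF, ← quadraticChar_eq_pow_of_char_ne_two' hF]
  congr 1
  by_cases hsq : IsSquare (a + b * t ^ 2)
  · rw [(quadraticChar_one_iff_isSquare (add_mul_sq_ne_zero hab t)).2 hsq,
      (quadraticChar_one_iff_isSquare (add_mul_sq_ne_zero hac t)).2 ((h t).1 hsq)]
  · rw [quadraticChar_neg_one_iff_not_isSquare.2 hsq,
      quadraticChar_neg_one_iff_not_isSquare.2 (mt (h t).2 hsq)]

-- Since `c = b * k ^ 2`, multiplication by `k` maps the finite set of all `t` with `a + b * t ^ 2`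
-- a nonsquare into itself, hence onto itself.
theorem eq_of_forall_not_isSquare_add_mul_sq [Finite F] {a b c : F}
    (hab : ¬ IsSquare (-(a * b))) (hac : ¬ IsSquare (-(a * c)))
    (h : ∀ t, ¬ IsSquare (a + b * t ^ 2) → ¬ IsSquare (a + c * t ^ 2)) : b = c := by
  obtain ⟨ha, hb⟩ : a ≠ 0 ∧ b ≠ 0 := by constructor <;> rintro rfl <;> simp at hab
  have hc : c ≠ 0 := by rintro rfl; simp at hac
  obtain ⟨k, hk⟩ : IsSquare (c / b) := by
    have hsq := (isSquare_mul_iff_not_isSquare hab (neg_ne_zero.2 (mul_ne_zero ha hc))).2 hac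
    rwa [show -(a * b) * -(a * c) = c / b * (a * b) ^ 2 by field_simp,
      isSquare_mul_sq_iff (mul_ne_zero ha hb)] at hsq
  have hk0 : k ≠ 0 := by rintro rfl; simp [hb, hc] at hk
  have hscale (t : F) : a + c * t ^ 2 = a + b * (k * t) ^ 2 := by
    rw [mul_pow, sq k, ← hk]
    field_simp
  have hbij : Set.BijOn (k * ·) {t | ¬ IsSquare (a + b * t ^ 2)} {t | ¬ IsSquare (a + b * t ^ 2)} :=
    ((Set.toFinite _).injOn_iff_bijOn_of_mapsTo fun t ht => by
      simpa only [Set.mem_ofPred_eq, hscale] using h t ht).1 (mul_right_injective₀ hk0).injOn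
  refine eq_of_forall_isSquare_add_mul_sq_iff hab hac fun t => not_iff_not.1 ⟨h t, fun ht => ?_⟩
  rw [hscale] at ht
  obtain ⟨u, hu, hut⟩ := hbij.surjOn ht
  rwa [← mul_left_cancel₀ hk0 hut]

theorem exists_not_isSquare_and_isSquare [Finite F] {a b c : F} (hc : c ≠ 0)
    (hab : ¬ IsSquare (-(a * b))) :
    ∃ s t, ¬ IsSquare (c * (a * s ^ 2 + b * t ^ 2)) ∧
      IsSquare (a * c * s ^ 2 + b * (a + c) * t ^ 2) := by
  by_contra! H
  obtain ⟨ha, hb⟩ : a ≠ 0 ∧ b ≠ 0 := by constructor <;> rintro rfl <;> simp at hab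
  have h₁ : ¬ IsSquare (-(a * c * (b * c))) := by
    rwa [show -(a * c * (b * c)) = -(a * b) * c ^ 2 by ring, isSquare_mul_sq_iff hc]
  have h₂ : ¬ IsSquare (-(a * c * (b * (a + c)))) := by
    rintro ⟨k, hk⟩
    refine H k (a * c) ?_ ⟨0, by linear_combination -(a * c) * hk⟩
    rwa [show c * (a * k ^ 2 + b * (a * c) ^ 2) = -(a * b) * (a * c) ^ 2 by
      linear_combination -(a * c) * hk, isSquare_mul_sq_iff (mul_ne_zero ha hc)]
  have hbc : b * c = b * (a + c) := eq_of_forall_not_isSquare_add_mul_sq h₁ h₂ fun t ht => by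
    simpa using H 1 t (by rwa [show c * (a * 1 ^ 2 + b * t ^ 2) = a * c + b * c * t ^ 2 by ring])
  exact mul_ne_zero hb ha (by linear_combination -hbc)

end FiniteField

section QuadraticForm

open QuadraticMap Module Submodule

variable {V : Type*} [AddCommGroup V] [Module F V] {Q : QuadraticForm F V} {L : Submodule F V}

theorem finrank_span_pair {p v : V} (h : LinearIndependent F ![p, v]) :
    finrank F (span F {p, v}) = 2 := by
  rw [← Matrix.range_cons_cons_empty, finrank_span_eq_card h, Fintype.card_fin]

theorem apply_smul_add_smul (Q : QuadraticForm F V) (s t : F) (p v : V) :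
    Q (s • p + t • v) = s ^ 2 * Q p + s * t * polar Q p v + t ^ 2 * Q v := by
  rw [QuadraticMap.map_add Q, QuadraticMap.map_smul, QuadraticMap.map_smul, polar_smul_left,
    polar_smul_right]
  simp only [smul_eq_mul]
  ring

theorem anisotropic_restrict_iff : (Q.restrict L).Anisotropic ↔ ∀ v ∈ L, Q v = 0 → v = 0 := by
  simp [Anisotropic, Submodule.mk_eq_zero]

theorem apply_ne_zero_of_anisotropic_restrict (hL : (Q.restrict L).Anisotropic) {v : V}
    (hv : v ∈ L) (hv0 : v ≠ 0) : Q v ≠ 0 :=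
  mt (anisotropic_restrict_iff.1 hL v hv) hv0

theorem linearIndependent_of_polar_eq_zero [NeZero (2 : F)] {p v : V} (hp : Q p ≠ 0) (hv : v ≠ 0)
    (h : polar Q p v = 0) : LinearIndependent F ![p, v] := by
  have hp0 : p ≠ 0 := by rintro rfl; simp at hp
  refine (LinearIndependent.pair_iff' hp0).2 fun k hk => hv ?_
  have hk0 : k = 0 := by simpa [← hk, hp, two_ne_zero] using h
  rw [← hk, hk0, zero_smul]

theorem anisotropic_restrict_span_pair_iff [NeZero (2 : F)] {p v : V}
    (hpv : LinearIndependent F ![p, v]) :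
    (Q.restrict (span F {p, v})).Anisotropic ↔
      ¬ IsSquare (discrim (Q p) (polar Q p v) (Q v)) := by
  have hroot (x : F) : Q p * (x * x) + polar Q p v * x + Q v = Q (x • p + (1 : F) • v) := by
    rw [apply_smul_add_smul]
    ring
  refine ⟨fun h hsq => ?_, fun hsq => anisotropic_restrict_iff.2 fun w hw hQw => ?_⟩
  · have hQp : Q p ≠ 0 := apply_ne_zero_of_anisotropic_restrict h
      (subset_span (Set.mem_insert p {v})) (hpv.ne_zero 0)
    obtain ⟨x, hx⟩ := exists_quadratic_eq_zero hQp hsq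
    have hzero := anisotropic_restrict_iff.1 h _ (mem_span_pair.2 ⟨x, 1, rfl⟩) (hroot x ▸ hx)
    exact one_ne_zero (LinearIndependent.pair_iff.1 hpv _ _ hzero).2
  · obtain ⟨s, t, rfl⟩ := mem_span_pair.1 hw
    by_cases ht : t = 0
    · subst ht
      have hQp : Q p ≠ 0 := fun h0 => hsq ⟨polar Q p v, by rw [discrim, h0]; ring⟩
      have hs : s = 0 := by simpa [QuadraticMap.map_smul, hQp] using hQw
      simp [hs]
    · refine absurd ⟨_, (discrim_eq_sq_of_quadratic_eq_zero (x := s / t) ?_).trans (sq _)⟩ hsq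
      rw [apply_smul_add_smul] at hQw
      field_simp
      linear_combination hQw

theorem anisotropic_restrict_span_pair_iff_of_polar_eq_zero [NeZero (2 : F)] {p v : V}
    (hpv : LinearIndependent F ![p, v]) (h : polar Q p v = 0) :
    (Q.restrict (span F {p, v})).Anisotropic ↔ ¬ IsSquare (-(Q p * Q v)) := by
  rw [anisotropic_restrict_span_pair_iff hpv, h,
    show discrim (Q p) 0 (Q v) = -(Q p * Q v) * 2 ^ 2 by rw [discrim]; ring,
    isSquare_mul_sq_iff two_ne_zero]

theorem exists_polar_eq_zero_and_span_pair_eq [NeZero (2 : F)] (hrank : finrank F L = 2)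
    (hL : (Q.restrict L).Anisotropic) {p : V} (hp : p ∈ L) (hp0 : p ≠ 0) :
    ∃ r ≠ 0, polar Q p r = 0 ∧ span F {p, r} = L := by
  have : FiniteDimensional F L := FiniteDimensional.of_finrank_pos (by omega)
  obtain ⟨⟨r, hr⟩, hpr, hr0⟩ := exists_mem_ne_zero_of_ne_bot <|
    LinearMap.ker_ne_bot_of_finrank_lt (f := (Q.polarBilin p).domRestrict L) (by simp [hrank])
  rw [Ne, mk_eq_zero] at hr0
  have hpr : polar Q p r = 0 := by simpa using hpr
  have hind := linearIndependent_of_polar_eq_zero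
    (apply_ne_zero_of_anisotropic_restrict hL hp hp0) hr0 hpr
  refine ⟨r, hr0, hpr, eq_of_le_of_finrank_eq ?_ ((finrank_span_pair hind).trans hrank.symm)⟩
  simp [span_le, Set.insert_subset_iff, hp, hr]

/-- `e` represents the pole of the hyperplane `L` with respect to `Q`: a nonzero vector which is
orthogonal to `L` and spans a complement of `L`. Complementarity excludes tangent hyperplanes, whose
pole lies on them. -/
structure IsPole (Q : QuadraticForm F V) (L : Submodule F V) (e : V) : Prop where
  ne_zero : e ≠ 0
  polar_eq_zero : ∀ p ∈ L, polar Q p e = 0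
  isCompl : IsCompl L (span F {e})

theorem exists_isPole [NeZero (2 : F)] [FiniteDimensional F V]
    (hrank : finrank F L + 1 = finrank F V) (hL : (Q.restrict L).Anisotropic) :
    ∃ e, IsPole Q L e := by
  have hrefl : Q.polarBilin.IsRefl := fun v w h => (polar_comm Q w v).trans h
  have hdisj : Disjoint L (LinearMap.BilinForm.orthogonal Q.polarBilin L) :=
    disjoint_def.2 fun v hv hvo => anisotropic_restrict_iff.1 hL v hv <| by
      simpa [two_ne_zero] using hvo v hv
  have hcompl := (LinearMap.BilinForm.isCompl_orthogonal_iff_disjoint hrefl).2 hdisj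
  have hone : finrank F (LinearMap.BilinForm.orthogonal Q.polarBilin L) = 1 := by
    have := finrank_add_eq_of_isCompl hcompl
    omega
  obtain ⟨e, he0, he⟩ := (atom_iff_nonzero_span _).1 (isAtom_iff_finrank_eq_one.2 hone)
  have hmem : e ∈ LinearMap.BilinForm.orthogonal Q.polarBilin L := he ▸ mem_span_singleton_self e
  exact ⟨e, he0, hmem, he ▸ hcompl⟩

namespace IsPole

variable {e : V}

theorem notMem (he : IsPole Q L e) : e ∉ L := fun h =>
  he.ne_zero (disjoint_def.1 he.isCompl.disjoint e h (mem_span_singleton_self e))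

theorem exists_eq_add_smul (he : IsPole Q L e) (v : V) : ∃ w ∈ L, ∃ z : F, v = w + z • e := by
  obtain ⟨w, hw, _, hy, rfl⟩ := mem_sup.1 (he.isCompl.sup_eq_top ▸ mem_top : v ∈ _)
  obtain ⟨z, rfl⟩ := mem_span_singleton.1 hy
  exact ⟨w, hw, z, rfl⟩

theorem apply_ne_zero (he : IsPole Q L e) (hQ : ∀ v, (∀ w, polar Q v w = 0) → v = 0) :
    Q e ≠ 0 := by
  refine fun h0 => he.ne_zero (hQ e fun v => ?_)
  obtain ⟨w, hw, z, rfl⟩ := he.exists_eq_add_smul v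
  simp [polar_comm Q e w, he.polar_eq_zero w hw, h0]

theorem polar_eq_zero_iff_mem_span_pair [NeZero (2 : F)] {p r : V}
    (he : IsPole Q (span F {p, r}) e) (hp : Q p ≠ 0) (hpr : polar Q p r = 0) (w : V) :
    polar Q p w = 0 ↔ w ∈ span F {r, e} := by
  have hpe := he.polar_eq_zero p (subset_span (Set.mem_insert p {r}))
  constructor
  · intro hpw
    obtain ⟨u, hu, z, rfl⟩ := he.exists_eq_add_smul w
    obtain ⟨s, t, rfl⟩ := mem_span_pair.1 hu
    have hs : s = 0 := by simpa [hpr, hpe, hp, two_ne_zero] using hpw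
    exact mem_span_pair.2 ⟨t, z, by simp [hs]⟩
  · intro hw
    obtain ⟨t, z, rfl⟩ := mem_span_pair.1 hw
    simp [hpr, hpe]

theorem exists_isotropic_polar_eq_zero_iff [Finite F] [NeZero (2 : F)] (he : IsPole Q L e)
    (hQe : Q e ≠ 0) (hrank : finrank F L = 2) (hL : (Q.restrict L).Anisotropic) {p : V}
    (hp : p ∈ L) (hp0 : p ≠ 0) :
    (∃ w, w ≠ 0 ∧ Q w = 0 ∧ polar Q p w = 0) ↔ ¬ IsSquare (Q e * Q p) := by
  obtain ⟨r, hr0, hpr, rfl⟩ := exists_polar_eq_zero_and_span_pair_eq hrank hL hp hp0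
  have hr : r ∈ span F {p, r} := subset_span (by simp)
  have hQp := apply_ne_zero_of_anisotropic_restrict hL hp hp0
  have hQr := apply_ne_zero_of_anisotropic_restrict hL hr hr0
  have hre := he.polar_eq_zero r hr
  have hns : ¬ IsSquare (-(Q p * Q r)) := (anisotropic_restrict_span_pair_iff_of_polar_eq_zero
    (linearIndependent_of_polar_eq_zero hQp hr0 hpr) hpr).1 hL
  calc (∃ w, w ≠ 0 ∧ Q w = 0 ∧ polar Q p w = 0)
    _ ↔ ¬ (Q.restrict (span F {r, e})).Anisotropic := by
      simp only [anisotropic_restrict_iff, he.polar_eq_zero_iff_mem_span_pair hQp hpr, not_forall,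
        exists_prop]
      exact exists_congr fun w => by tauto
    _ ↔ IsSquare (-(Q r * Q e)) := by
      rw [anisotropic_restrict_span_pair_iff_of_polar_eq_zero
        (linearIndependent_of_polar_eq_zero hQr he.ne_zero hre) hre, not_not]
    _ ↔ IsSquare (-(Q p * Q r) * (Q e * Q p)) := by
      rw [← isSquare_mul_sq_iff hQp]
      ring_nf
    _ ↔ ¬ IsSquare (Q e * Q p) := isSquare_mul_iff_not_isSquare hns (mul_ne_zero hQe hQp)

theorem discrim_eq {w r : V} (he : IsPole Q L e) (hw : w ∈ L) (hr : r ∈ L)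
    (hwr : polar Q w r = 0) (s t z : F) :
    discrim (Q (s • w + t • r)) (polar Q (s • w + t • r) (w + z • e)) (Q (w + z • e)) =
      -1 * (Q w * (z ^ 2 * Q e) * s ^ 2 + Q r * (Q w + z ^ 2 * Q e) * t ^ 2) * 2 ^ 2 := by
  have hv : Q (w + z • e) = Q w + z ^ 2 * Q e := by
    simpa [he.polar_eq_zero w hw] using apply_smul_add_smul Q 1 z w e
  have hpv : polar Q (s • w + t • r) (w + z • e) = 2 * s * Q w := by
    simp only [polar_add_left, polar_add_right, polar_smul_left, polar_smul_right, polar_self,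
      polar_comm Q r w, hwr, he.polar_eq_zero w hw, he.polar_eq_zero r hr, smul_eq_mul,
      nsmul_eq_mul, Nat.cast_ofNat]
    ring
  rw [hv, hpv, apply_smul_add_smul, hwr, discrim]
  ring

theorem exists_not_isSquare_and_isSquare_discrim [Finite F] [NeZero (2 : F)]
    (hneg : IsSquare (-1 : F)) (he : IsPole Q L e) (hQe : Q e ≠ 0) (hrank : finrank F L = 2)
    (hL : (Q.restrict L).Anisotropic) {v : V} (hvL : v ∉ L) (hve : v ∉ span F {e}) :
    ∃ p ∈ L, ¬ IsSquare (Q e * Q p) ∧ IsSquare (discrim (Q p) (polar Q p v) (Q v)) := by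
  obtain ⟨w, hw, z, rfl⟩ := he.exists_eq_add_smul v
  have hz : z ≠ 0 := by
    rintro rfl
    simp [hw] at hvL
  have hw0 : w ≠ 0 := by
    rintro rfl
    exact hve (by simp [mem_span_singleton])
  obtain ⟨r, hr0, hwr, rfl⟩ := exists_polar_eq_zero_and_span_pair_eq hrank hL hw hw0
  have hr : r ∈ span F {w, r} := subset_span (by simp)
  have hQw := apply_ne_zero_of_anisotropic_restrict hL hw hw0
  have hns : ¬ IsSquare (-(Q w * Q r)) := (anisotropic_restrict_span_pair_iff_of_polar_eq_zero
    (linearIndependent_of_polar_eq_zero hQw hr0 hwr) hwr).1 hL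
  obtain ⟨s, t, hst, hsq⟩ :=
    exists_not_isSquare_and_isSquare (mul_ne_zero (pow_ne_zero 2 hz) hQe) hns
  refine ⟨s • w + t • r, mem_span_pair.2 ⟨s, t, rfl⟩, ?_, ?_⟩
  · rwa [← isSquare_mul_sq_iff hz, apply_smul_add_smul, hwr,
      show Q e * (s ^ 2 * Q w + s * t * 0 + t ^ 2 * Q r) * z ^ 2 =
        z ^ 2 * Q e * (Q w * s ^ 2 + Q r * t ^ 2) by ring]
  · rw [he.discrim_eq hw hr hwr]
    exact (hneg.mul hsq).mul (.sq 2)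

end IsPole

end QuadraticForm

section Incidence

open Module Submodule Projectivization

variable {C E S : Set (PGPoint F)} {L M : Submodule F (Fin 3 → F)} {P R : PGPoint F}

theorem mk_mem_pointsOn {v : Fin 3 → F} {hv : v ≠ 0} : mk F v hv ∈ pointsOn L ↔ v ∈ L := by
  simp [pointsOn]

theorem isProjLine_sup (h : P ≠ R) : IsProjLine F (P.submodule ⊔ R.submodule) := by
  rw [IsProjLine, P.submodule_eq, R.submodule_eq, ← span_insert]
  exact finrank_span_pair (linearIndependent_pair_iff_ne.2 h)

theorem IsProjLine.sup_eq (hM : IsProjLine F M) (hP : P ∈ pointsOn M) (hR : R ∈ pointsOn M)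
    (h : P ≠ R) : P.submodule ⊔ R.submodule = M :=
  eq_of_le_of_finrank_eq (sup_le hP hR) ((isProjLine_sup h).trans hM.symm)

theorem isExteriorSet_iff_pairwise :
    IsExteriorSet C E ↔ E.Pairwise fun P R => IsExternalLine C (P.submodule ⊔ R.submodule) := by
  refine ⟨fun h P hP R hR hne => h _ (isProjLine_sup hne)
    ⟨P, ⟨hP, le_sup_left (a := P.submodule)⟩, R, ⟨hR, le_sup_right (b := R.submodule)⟩, hne⟩, ?_⟩
  rintro h M hM ⟨P, ⟨hP, hPM⟩, R, ⟨hR, hRM⟩, hne⟩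
  exact hM.sup_eq hPM hRM hne ▸ h hP hR hne

theorem isExteriorSet_union_singleton_iff (hL : IsExternalLine C L) (hS : S ⊆ pointsOn L)
    (hP : P ∉ pointsOn L) :
    IsExteriorSet C (S ∪ {P}) ↔ ∀ R ∈ S, IsExternalLine C (R.submodule ⊔ P.submodule) := by
  have hpair : S.Pairwise fun P R => IsExternalLine C (P.submodule ⊔ R.submodule) :=
    fun R hR R' hR' hne => by simpa only [hL.1.sup_eq (hS hR) (hS hR') hne] using hL
  have : Std.Symm fun P R : PGPoint F => IsExternalLine C (P.submodule ⊔ R.submodule) :=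
    ⟨fun P R h => by rwa [sup_comm]⟩
  rw [isExteriorSet_iff_pairwise, Set.union_singleton, Set.pairwise_insert_of_symm,
    and_iff_right hpair]
  refine forall₂_congr fun R hR => ?_
  rw [sup_comm, imp_iff_right (ne_of_mem_of_not_mem (hS hR) hP).symm]

end Incidence

section Conic

open QuadraticMap Module Submodule Projectivization

variable {Q : QuadraticForm F (Fin 3 → F)} {L : Submodule F (Fin 3 → F)}

theorem mk_mem_conicSet {v : Fin 3 → F} {hv : v ≠ 0} : mk F v hv ∈ conicSet Q ↔ Q v = 0 := by
  simp only [conicSet, Set.mem_ofPred_eq, submodule_mk]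
  refine ⟨fun h => h v (mem_span_singleton_self v), fun h w hw => ?_⟩
  obtain ⟨k, rfl⟩ := mem_span_singleton.1 hw
  rw [QuadraticMap.map_smul, h, smul_zero]

theorem isExternalLine_conicSet_iff :
    IsExternalLine (conicSet Q) L ↔ IsProjLine F L ∧ (Q.restrict L).Anisotropic := by
  rw [anisotropic_restrict_iff, IsExternalLine, Set.eq_empty_iff_forall_notMem]
  refine and_congr_right fun _ => ⟨fun h v hv hQv => by_contra fun hv0 => ?_, fun h P => ?_⟩
  · exact h (mk F v hv0) ⟨mk_mem_conicSet.2 hQv, mk_mem_pointsOn.2 hv⟩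
  · induction P using Projectivization.ind with | h v hv0 =>
    rintro ⟨hP, hPL⟩
    exact hv0 (h v (mk_mem_pointsOn.1 hPL) (mk_mem_conicSet.1 hP))

theorem isExternalLine_mk_sup_mk_iff [NeZero (2 : F)] {p v : Fin 3 → F} {hp0 : p ≠ 0} {hv0 : v ≠ 0}
    (h : mk F p hp0 ≠ mk F v hv0) :
    IsExternalLine (conicSet Q) ((mk F p hp0).submodule ⊔ (mk F v hv0).submodule) ↔
      ¬ IsSquare (discrim (Q p) (polar Q p v) (Q v)) := by
  have hpv : LinearIndependent F ![p, v] := (LinearIndependent.pair_iff' hp0).2 fun k hk =>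
    h ((mk_eq_mk_iff' F _ _ hv0 hp0).2 ⟨k, hk⟩).symm
  rw [isExternalLine_conicSet_iff, and_iff_right (isProjLine_sup h), submodule_mk, submodule_mk,
    ← span_insert, anisotropic_restrict_span_pair_iff hpv]

-- `Q p • w - B • p`, where `B = polar Q p w`, is a multiple of the reflection of `w` in `p`; it is
-- a second point of the conic on the line through `p` and `w` unless `B = 0`.
theorem IsTangentLine.exists_polar_eq_zero (hL : IsTangentLine (conicSet Q) L) {p : Fin 3 → F}
    (hp : p ∈ L) (hQp : Q p ≠ 0) : ∃ w, w ≠ 0 ∧ Q w = 0 ∧ polar Q p w = 0 := by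
  obtain ⟨-, P, ⟨hPQ, hPL⟩, huniq⟩ := hL
  induction P using Projectivization.ind with | h w hw0 =>
  rw [mk_mem_conicSet] at hPQ
  rw [mk_mem_pointsOn] at hPL
  refine ⟨w, hw0, hPQ, by_contra fun hB => ?_⟩
  have hp_notMem (k : F) : -polar Q p w • p ≠ k • w := fun h => by
    simpa [QuadraticMap.map_smul, hPQ, hB, hQp] using congrArg Q h
  set w' := -polar Q p w • p + Q p • w with hw'
  have hw'0 : w' ≠ 0 := fun h => hp_notMem (-Q p) <| by
    rw [neg_smul (Q p)]
    exact eq_neg_of_add_eq_zero_left h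
  have hQw' : Q w' = 0 := by
    rw [hw', apply_smul_add_smul, hPQ]
    ring
  have hw'L : w' ∈ L := L.add_mem (L.smul_mem _ hp) (L.smul_mem _ hPL)
  obtain ⟨k, hk⟩ := (mk_eq_mk_iff' F _ _ hw'0 hw0).1
    (huniq (mk F w' hw'0) ⟨mk_mem_conicSet.2 hQw', mk_mem_pointsOn.2 hw'L⟩)
  exact hp_notMem (k - Q p) (by rw [sub_smul, hk]; exact (add_sub_cancel_right _ _).symm)

theorem isTangentLine_span_pair [NeZero (2 : F)] {p w : Fin 3 → F} (hQp : Q p ≠ 0) (hw0 : w ≠ 0)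
    (hQw : Q w = 0) (hpw : polar Q p w = 0) : IsTangentLine (conicSet Q) (span F {p, w}) := by
  refine ⟨finrank_span_pair (linearIndependent_of_polar_eq_zero hQp hw0 hpw), mk F w hw0,
    ⟨mk_mem_conicSet.2 hQw, mk_mem_pointsOn.2 (subset_span (by simp))⟩, ?_⟩
  rintro P ⟨hPQ, hPL⟩
  induction P using Projectivization.ind with | h v hv0 =>
  obtain ⟨s, t, rfl⟩ := mem_span_pair.1 (mk_mem_pointsOn.1 hPL)
  have hs : s = 0 := by simpa [mk_mem_conicSet, apply_smul_add_smul, hQw, hpw, hQp] using hPQ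
  exact (mk_eq_mk_iff' F _ _ hv0 hw0).2 ⟨t, by simp [hs]⟩

theorem isExteriorPoint_mk_iff [NeZero (2 : F)] {p : Fin 3 → F} {hp0 : p ≠ 0} (hQp : Q p ≠ 0) :
    IsExteriorPoint (conicSet Q) (mk F p hp0) ↔ ∃ w, w ≠ 0 ∧ Q w = 0 ∧ polar Q p w = 0 := by
  rw [IsExteriorPoint, mk_mem_conicSet, and_iff_right hQp]
  constructor
  · rintro ⟨T, hT, hp⟩
    exact hT.exists_polar_eq_zero (mk_mem_pointsOn.1 hp) hQp
  · rintro ⟨w, hw0, hQw, hpw⟩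
    exact ⟨_, isTangentLine_span_pair hQp hw0 hQw hpw, mk_mem_pointsOn.2 (subset_span (by simp))⟩

namespace IsPole

variable {e : Fin 3 → F}

theorem mk_notMem_pointsOn (he : IsPole Q L e) :
    Projectivization.mk F e he.ne_zero ∉ pointsOn L :=
  mt mk_mem_pointsOn.1 he.notMem

variable [Finite F] [NeZero (2 : F)]

theorem isExteriorPoint_mk_iff (he : IsPole Q L e) (hQe : Q e ≠ 0)
    (hL : IsExternalLine (conicSet Q) L) {p : Fin 3 → F} {hp0 : p ≠ 0} (hp : p ∈ L) :
    IsExteriorPoint (conicSet Q) (Projectivization.mk F p hp0) ↔ ¬ IsSquare (Q e * Q p) := by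
  obtain ⟨hrank, haniso⟩ := isExternalLine_conicSet_iff.1 hL
  rw [_root_.isExteriorPoint_mk_iff (apply_ne_zero_of_anisotropic_restrict haniso hp hp0),
    he.exists_isotropic_polar_eq_zero_iff hQe hrank haniso hp hp0]

theorem isExternalLine_sup_mk (hneg : IsSquare (-1 : F)) (he : IsPole Q L e) (hQe : Q e ≠ 0)
    (hL : IsExternalLine (conicSet Q) L) {R : PGPoint F} (hR : R ∈ pointsOn L)
    (hext : IsExteriorPoint (conicSet Q) R) :
    IsExternalLine (conicSet Q)
      (R.submodule ⊔ (Projectivization.mk F e he.ne_zero).submodule) := by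
  have hne := ne_of_mem_of_not_mem hR he.mk_notMem_pointsOn
  induction R using Projectivization.ind with | h p hp0 =>
  rw [mk_mem_pointsOn] at hR
  rw [isExternalLine_mk_sup_mk_iff hne, he.polar_eq_zero p hR]
  intro hsq
  refine (he.isExteriorPoint_mk_iff hQe hL hR).1 hext
    ((isSquare_mul_sq_iff (two_ne_zero (α := F))).1 ?_)
  rw [show Q e * Q p * 2 ^ 2 = -1 * discrim (Q p) 0 (Q e) by rw [discrim]; ring]
  exact hneg.mul hsq

theorem exists_isExteriorPoint_not_isExternalLine_sup (hneg : IsSquare (-1 : F))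
    (he : IsPole Q L e) (hQe : Q e ≠ 0) (hL : IsExternalLine (conicSet Q) L) {P : PGPoint F}
    (hPL : P ∉ pointsOn L) (hPe : P ≠ Projectivization.mk F e he.ne_zero) :
    ∃ R ∈ pointsOn L, IsExteriorPoint (conicSet Q) R ∧
      ¬ IsExternalLine (conicSet Q) (R.submodule ⊔ P.submodule) := by
  obtain ⟨hrank, haniso⟩ := isExternalLine_conicSet_iff.1 hL
  induction P using Projectivization.ind with | h v hv0 =>
  have hve : v ∉ span F {e} := fun h =>
    hPe ((mk_eq_mk_iff' F _ _ hv0 _).2 (mem_span_singleton.1 h))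
  obtain ⟨p, hp, hns, hsq⟩ := he.exists_not_isSquare_and_isSquare_discrim hneg hQe hrank haniso
    (mt mk_mem_pointsOn.2 hPL) hve
  have hp0 : p ≠ 0 := by rintro rfl; simp at hns
  have hR : Projectivization.mk F p hp0 ∈ pointsOn L := mk_mem_pointsOn.2 hp
  refine ⟨Projectivization.mk F p hp0, hR, (he.isExteriorPoint_mk_iff hQe hL hp).2 hns, ?_⟩
  rwa [isExternalLine_mk_sup_mk_iff (ne_of_mem_of_not_mem hR hPL), not_not]

end IsPole

end Conic

/-- `q ≡ 1 (mod 4)`, `q` odd; there is a unique point `Q₀` off an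
external line `L` of an irreducible conic `C` such that the exterior points of
`C` on `L` together with `Q₀` form an exterior set of `C`. -/
theorem stmt_13 [Fintype F] (hq : Fintype.card F % 4 = 1) (hodd : Odd (Fintype.card F))
    (Q : QuadraticForm F (Fin 3 → F)) (hQ : NondegQF Q)
    (L : Submodule F (Fin 3 → F)) (hL : IsExternalLine (conicSet Q) L) :
    ∃! Q0 : PGPoint F, Q0 ∉ pointsOn L ∧
      IsExteriorSet (conicSet Q)
        ({P ∈ pointsOn L | IsExteriorPoint (conicSet Q) P} ∪ {Q0}) := by
  have hneg : IsSquare (-1 : F) := FiniteField.isSquare_neg_one_iff.2 (by omega)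
  have : NeZero (2 : F) := ⟨Ring.two_ne_zero fun h => by
    have := FiniteField.even_card_of_char_two h
    omega⟩
  obtain ⟨hrank, haniso⟩ := isExternalLine_conicSet_iff.1 hL
  obtain ⟨e, he⟩ := exists_isPole (by rw [hrank, Module.finrank_fin_fun]) haniso
  have hQe : Q e ≠ 0 := he.apply_ne_zero hQ
  have hexterior {P : PGPoint F} (hP : P ∉ pointsOn L) :=
    isExteriorSet_union_singleton_iff hL (Set.sep_subset _ (IsExteriorPoint (conicSet Q))) hP
  refine ⟨Projectivization.mk F e he.ne_zero, ⟨he.mk_notMem_pointsOn,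
    (hexterior he.mk_notMem_pointsOn).2 fun R hR =>
      he.isExternalLine_sup_mk hneg hQe hL hR.1 hR.2⟩, ?_⟩
  rintro P ⟨hPL, hP⟩
  by_contra hPe
  obtain ⟨R, hR, hRext, hRP⟩ :=
    he.exists_isExteriorPoint_not_isExternalLine_sup hneg hQe hL hPL hPe
  exact hRP ((hexterior hPL).1 hP R ⟨hR, hRext⟩)
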